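/- Let (ℬ, 𝒜, i, e, r) be a cleft coextension of abelian categories with enough projective objects such that r is exact and the induced endofunctor F' satisfies F'ⁿ = 0 for a positive integer n. Then dim ℬ ≤ dim 𝒜 ≤ n(dim ℬ + 1) − 1. -/

import Mathlib

open CategoryTheory Limits

attribute [local instance] CategoryTheory.Limits.HasFiniteBiproducts.of_hasFiniteProducts

noncomputable section

universe v u v' u'

/-- The `n`-th power of an endofunctor. -/
def fpow {C : Type u} [Category.{v} C] (G : C ⥤ C) : ℕ → (C ⥤ C)
  | 0 => 𝟭 C
  | n + 1 => fpow G n ⋙ G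

/-- `add 𝒰`: the class of direct summands of finite direct sums of objects of `𝒰`. -/
def addClosure {C : Type u} [Category.{v} C] [Abelian C] (S : Set C) : Set C :=
  {X | ∃ (n : ℕ) (g : Fin n → C), (∀ k, g k ∈ S) ∧
    ∃ (s : X ⟶ ⨁ g) (p : (⨁ g) ⟶ X), s ≫ p = 𝟙 X}

/-- The operation `𝒰₁ • 𝒰₂`. -/
def bulletOp {C : Type u} [Category.{v} C] [Abelian C] (S T : Set C) : Set C :=
  addClosure {X | ∃ (U V : C) (_ : U ∈ S) (_ : V ∈ T) (f : U ⟶ X) (g : X ⟶ V)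
    (w : f ≫ g = 0), (ShortComplex.mk f g w).ShortExact}

/-- `[T]_n`. -/
def bracket {C : Type u} [Category.{v} C] [Abelian C] (T : C) : ℕ → Set C
  | 0 => {X | IsZero X}
  | n + 1 => bulletOp (addClosure {T}) (bracket T n)

/-- The extension dimension of an abelian category:  the least `n` such that
`𝒞 = [T]_{n+1}` for some object `T` (or `∞` if there is no such `n`). -/
noncomputable def extDim (C : Type u) [Category.{v} C] [Abelian C] : ℕ∞ :=
  sInf {x : ℕ∞ | ∃ m : ℕ, x = (m : ℕ∞) ∧ ∃ T : C, ∀ X : C, X ∈ bracket T (m + 1)}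

section Abelian

open scoped ZeroObject

variable {C : Type u} [Category.{v} C] [Abelian C]

/-- `X` is an extension of `V` by `U`, i.e. there is a short exact sequence
`0 ⟶ U ⟶ X ⟶ V ⟶ 0`. -/
def IsExtension (U X V : C) : Prop :=
  ∃ (f : U ⟶ X) (g : X ⟶ V) (w : f ≫ g = 0), (ShortComplex.mk f g w).ShortExact

lemma IsExtension.of_refinements {U X V : C} (f : U ⟶ X) (g : X ⟶ V) [Mono f] [Epi g]
    (w : f ≫ g = 0)
    (h : ∀ ⦃A : C⦄ (x : A ⟶ X), x ≫ g = 0 →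
      ∃ (A' : C) (π : A' ⟶ A) (_ : Epi π) (u : A' ⟶ U), π ≫ x = u ≫ f) :
    IsExtension U X V :=
  ⟨f, g, w, .mk' ((ShortComplex.mk f g w).exact_iff_exact_up_to_refinements.2 h)
    inferInstance inferInstance⟩

lemma IsExtension.of_lift {U X V : C} (f : U ⟶ X) (g : X ⟶ V) [Mono f] [Epi g]
    (w : f ≫ g = 0) (h : ∀ ⦃A : C⦄ (x : A ⟶ X), x ≫ g = 0 → ∃ u : A ⟶ U, u ≫ f = x) :
    IsExtension U X V :=
  .of_refinements f g w fun A x hx ↦ by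
    obtain ⟨u, hu⟩ := h x hx
    exact ⟨A, 𝟙 A, inferInstance, u, by simp [hu]⟩

lemma IsExtension.exists_lift {U X V : C} (h : IsExtension U X V) :
    ∃ (f : U ⟶ X) (g : X ⟶ V), Mono f ∧ Epi g ∧ f ≫ g = 0 ∧
      ∀ ⦃A : C⦄ (x : A ⟶ X), x ≫ g = 0 → ∃ u : A ⟶ U, u ≫ f = x := by
  obtain ⟨f, g, w, h⟩ := h
  exact ⟨f, g, h.mono_f, h.epi_g, w, fun A x hx ↦
    have := h.mono_f
    ⟨h.exact.lift x hx, h.exact.lift_f x hx⟩⟩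

lemma IsExtension.of_iso {U X V U' X' V' : C} (h : IsExtension U X V)
    (a : U ≅ U') (b : X ≅ X') (c : V ≅ V') : IsExtension U' X' V' := by
  obtain ⟨f, g, hf, hg, w, hl⟩ := h.exists_lift
  refine .of_lift (a.inv ≫ f ≫ b.hom) (b.inv ≫ g ≫ c.hom) (by simp [reassoc_of% w]) ?_
  intro A x hx
  obtain ⟨u, hu⟩ := hl (x ≫ b.inv) (by simpa [← Category.assoc] using hx)
  exact ⟨u ≫ a.hom, by simp [reassoc_of% hu]⟩

lemma IsExtension.of_epi {X V : C} (g : X ⟶ V) [Epi g] : IsExtension (kernel g) X V :=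
  .of_lift (kernel.ι g) g (kernel.condition g) fun _ x hx ↦ ⟨kernel.lift g x hx, by simp⟩

lemma IsExtension.biprod_inl_snd (U V : C) : IsExtension U (U ⊞ V) V :=
  .of_lift biprod.inl biprod.snd (by simp) fun _ x hx ↦ ⟨x ≫ biprod.fst, by
    ext <;> simp [hx]⟩

lemma IsExtension.of_isZero_right {X Z : C} (hZ : IsZero Z) : IsExtension X X Z :=
  have : Epi (0 : X ⟶ Z) := ⟨fun _ _ _ ↦ hZ.eq_of_src _ _⟩
  .of_lift (𝟙 X) 0 (by simp) fun _ x _ ↦ ⟨x, by simp⟩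

lemma IsExtension.of_isZero_left {X Z : C} (hZ : IsZero Z) : IsExtension Z X X :=
  have : Mono (0 : Z ⟶ X) := ⟨fun _ _ _ ↦ hZ.eq_of_tgt _ _⟩
  .of_lift 0 (𝟙 X) (by simp) fun _ x hx ↦ ⟨0, by simpa using hx.symm⟩

lemma IsExtension.nonempty_iso_of_isZero_left {U X V : C} (h : IsExtension U X V)
    (hU : IsZero U) : Nonempty (X ≅ V) := by
  obtain ⟨f, g, hf, hg, w, hl⟩ := h.exists_lift
  have : Mono g := Preadditive.mono_of_cancel_zero _ fun x hx ↦ by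
    obtain ⟨u, rfl⟩ := hl x hx
    simp [hU.eq_of_tgt u 0]
  have := isIso_of_mono_of_epi g
  exact ⟨asIso g⟩

lemma IsExtension.biprod {U X V U' X' V' : C} (h : IsExtension U X V)
    (h' : IsExtension U' X' V') : IsExtension (U ⊞ U') (X ⊞ X') (V ⊞ V') := by
  obtain ⟨f, g, hf, hg, w, hl⟩ := h.exists_lift
  obtain ⟨f', g', hf', hg', w', hl'⟩ := h'.exists_lift
  refine .of_lift (biprod.map f f') (biprod.map g g') (by ext <;> simp [w, w']) ?_
  intro A x hx
  obtain ⟨u, hu⟩ := hl (x ≫ biprod.fst) (by simpa using hx =≫ biprod.fst)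
  obtain ⟨u', hu'⟩ := hl' (x ≫ biprod.snd) (by simpa using hx =≫ biprod.snd)
  exact ⟨biprod.lift u u', by ext <;> simp [hu, hu']⟩

/-- Extensions are associative. -/
lemma IsExtension.assoc {U Z V X Y : C} (h : IsExtension U Z V) (h' : IsExtension Z X Y) :
    ∃ E, IsExtension U X E ∧ IsExtension V E Y := by
  obtain ⟨f, g, hf, hg, w, hl⟩ := h.exists_lift
  obtain ⟨f', g', hf', hg', w', hl'⟩ := h'.exists_lift
  have hker : ∀ ⦃A : C⦄ (x : A ⟶ X), x ≫ cokernel.π (f ≫ f') = 0 →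
      ∃ u : A ⟶ U, u ≫ f ≫ f' = x := fun A x hx ↦
    ⟨Abelian.monoLift (f ≫ f') x hx, Abelian.monoLift_comp _ _ _⟩
  refine ⟨cokernel (f ≫ f'), .of_lift (f ≫ f') (cokernel.π _) (by simp) hker, ?_⟩
  obtain ⟨j, hj⟩ : ∃ j : V ⟶ cokernel (f ≫ f'), g ≫ j = f' ≫ cokernel.π (f ≫ f') := by
    let s : ShortComplex C := .mk f g w
    have hs : s.Exact := s.exact_iff_exact_up_to_refinements.2 fun A x hx ↦ by
      obtain ⟨u, hu⟩ := hl x hx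
      exact ⟨A, 𝟙 A, inferInstance, u, by simp [s, hu]⟩
    have : Epi s.g := hg
    exact ⟨hs.desc (f' ≫ cokernel.π (f ≫ f')) (by
      rw [← Category.assoc]; exact cokernel.condition (f ≫ f')), hs.g_desc _ _⟩
  let q : cokernel (f ≫ f') ⟶ Y := cokernel.desc _ g' (by simp [w'])
  have hq : cokernel.π _ ≫ q = g' := cokernel.π_desc _ _ _
  have : Epi q := epi_of_epi_fac hq
  have : Mono j := Preadditive.mono_of_cancel_zero _ fun {A} y hy ↦ by
    obtain ⟨A', π, hπ, z, hz⟩ := surjective_up_to_refinements_of_epi g y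
    obtain ⟨u, hu⟩ := hker (z ≫ f') (by
      rw [Category.assoc, ← hj, ← reassoc_of% hz, hy, comp_zero])
    have : u ≫ f = z := by rw [← cancel_mono f', Category.assoc, hu]
    rw [← cancel_epi π, hz, ← this, Category.assoc, w, comp_zero, comp_zero]
  refine .of_refinements j q ?_ ?_
  · rw [← cancel_epi g, reassoc_of% hj, hq, w', comp_zero]
  · intro A x hx
    obtain ⟨A', π, hπ, z, hz⟩ := surjective_up_to_refinements_of_epi (cokernel.π (f ≫ f')) x
    obtain ⟨u, hu⟩ := hl' z (by rw [← hq, ← reassoc_of% hz, hx, comp_zero])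
    exact ⟨A', π, hπ, u ≫ g, by rw [hz, ← hu, Category.assoc, Category.assoc, hj]⟩

/-- The horseshoe lemma. -/
lemma IsExtension.horseshoe {U X V P Q K L : C} [Projective Q] (h : IsExtension U X V)
    (hU : IsExtension K P U) (hV : IsExtension L Q V) :
    ∃ M, IsExtension K M L ∧ IsExtension M (P ⊞ Q) X := by
  obtain ⟨f, g, hf, hg, w, hl⟩ := h.exists_lift
  obtain ⟨k, a, hk, ha, wa, hla⟩ := hU.exists_lift
  obtain ⟨l, b, hL, hb, wb, hlb⟩ := hV.exists_lift
  let t : Q ⟶ X := Projective.factorThru b g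
  have ht : t ≫ g = b := Projective.factorThru_comp b g
  let φ : P ⊞ Q ⟶ X := biprod.desc (a ≫ f) t
  have hφ : φ ≫ g = biprod.snd ≫ b := by ext <;> simp [φ, w, ht]
  have hφ' : ∀ {A : C} (x : A ⟶ P ⊞ Q), x ≫ φ = (x ≫ biprod.fst) ≫ a ≫ f +
      (x ≫ biprod.snd) ≫ t := fun x ↦ by
    simp [φ, biprod.desc_eq]
  have : Epi φ := by
    rw [epi_iff_surjective_up_to_refinements]
    intro A x
    obtain ⟨A₁, π₁, _, y, hy⟩ := surjective_up_to_refinements_of_epi b (x ≫ g)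
    obtain ⟨u, hu⟩ := hl (π₁ ≫ x - y ≫ t) (by simp [ht, hy])
    obtain ⟨A₂, π₂, _, z, hz⟩ := surjective_up_to_refinements_of_epi a u
    refine ⟨A₂, π₂ ≫ π₁, inferInstance, biprod.lift z (π₂ ≫ y), ?_⟩
    rw [hφ', biprod.lift_fst, biprod.lift_snd, ← reassoc_of% hz, hu]
    simp
  refine ⟨kernel φ, ?_, .of_epi φ⟩
  obtain ⟨q, hq⟩ := hlb (kernel.ι φ ≫ biprod.snd) (by rw [Category.assoc, ← hφ]; simp)
  let m : K ⟶ kernel φ := kernel.lift φ (k ≫ biprod.inl) (by simp [φ, reassoc_of% wa])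
  have hm : m ≫ kernel.ι φ = k ≫ biprod.inl := kernel.lift_ι _ _ _
  have : Mono m := mono_of_mono_fac hm
  have : Epi q := by
    rw [epi_iff_surjective_up_to_refinements]
    intro A y
    obtain ⟨u, hu⟩ := hl (y ≫ l ≫ t) (by simp [ht, wb])
    obtain ⟨A₁, π, _, z, hz⟩ := surjective_up_to_refinements_of_epi a u
    refine ⟨A₁, π, inferInstance, kernel.lift φ (biprod.lift (-z) (π ≫ y ≫ l)) ?_, ?_⟩
    · rw [hφ', biprod.lift_fst, biprod.lift_snd, Preadditive.neg_comp, ← reassoc_of% hz, hu]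
      simp
    · rw [← cancel_mono l, Category.assoc, Category.assoc, hq]
      simp
  refine .of_lift m q ?_ ?_
  · rw [← cancel_mono l, Category.assoc, hq, reassoc_of% hm]
    simp
  · intro A x hx
    have h₂ : (x ≫ kernel.ι φ) ≫ biprod.snd = 0 := by
      rw [Category.assoc, ← hq, reassoc_of% hx, zero_comp]
    have h₁ := hφ' (x ≫ kernel.ι φ)
    rw [h₂, zero_comp, add_zero, Category.assoc, kernel.condition, comp_zero,
      ← Category.assoc _ a] at h₁
    obtain ⟨u, hu⟩ := hla ((x ≫ kernel.ι φ) ≫ biprod.fst) (zero_of_comp_mono f h₁.symm)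
    refine ⟨u, ?_⟩
    rw [← cancel_mono (kernel.ι φ), Category.assoc, hm]
    ext
    · simpa using hu
    · simpa using h₂.symm

lemma IsExtension.syzygy_of_retract {K P Z X : C} [Projective P] (h : IsExtension K P Z)
    (ρ : Retract X Z) : ∃ L, IsExtension L P X ∧ Nonempty (Retract L (K ⊞ P)) := by
  obtain ⟨k, a, hk, ha, wa, hl⟩ := h.exists_lift
  refine ⟨kernel (a ≫ ρ.r), .of_epi _, ?_⟩
  have hι : kernel.ι (a ≫ ρ.r) ≫ a ≫ ρ.r = 0 := kernel.condition _
  have hι' : kernel.ι (a ≫ ρ.r) ≫ a ≫ ρ.r ≫ ρ.i = 0 := by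
    rw [← Category.assoc a, ← Category.assoc, hι, zero_comp]
  let φ : P ⟶ P := Projective.factorThru (a ≫ ρ.r ≫ ρ.i) a
  have hφ : φ ≫ a = a ≫ ρ.r ≫ ρ.i := Projective.factorThru_comp _ a
  obtain ⟨s, hs⟩ := hl (kernel.ι (a ≫ ρ.r) ≫ φ) (by
    simp [hφ, hι'])
  let j : K ⟶ kernel (a ≫ ρ.r) := kernel.lift _ k (by simp [reassoc_of% wa])
  let ψ : P ⟶ kernel (a ≫ ρ.r) := kernel.lift _ (𝟙 P - φ) (by
    simp [reassoc_of% hφ])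
  refine ⟨⟨biprod.lift s (kernel.ι _), biprod.desc j ψ, ?_⟩⟩
  rw [← cancel_mono (kernel.ι (a ≫ ρ.r))]
  simp [biprod.lift_desc, j, ψ, hs]

lemma exists_iso_biprod_of_retract {X Y : C} (ρ : Retract X Y) :
    ∃ X' : C, Nonempty (Y ≅ X ⊞ X') := by
  refine ⟨kernel ρ.r, ⟨⟨biprod.lift ρ.r (kernel.lift ρ.r (𝟙 Y - ρ.r ≫ ρ.i) (by simp)),
    biprod.desc ρ.i (kernel.ι ρ.r), by simp [biprod.lift_desc], ?_⟩⟩⟩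
  ext <;> simp

lemma IsExtension.exists_of_retract {U X V U' V' : C} (h : IsExtension U X V)
    (ρ : Retract U U') (σ : Retract V V') :
    ∃ X', IsExtension U' X' V' ∧ Nonempty (Retract X X') := by
  obtain ⟨U₂, ⟨a⟩⟩ := exists_iso_biprod_of_retract ρ
  obtain ⟨V₂, ⟨b⟩⟩ := exists_iso_biprod_of_retract σ
  exact ⟨X ⊞ (U₂ ⊞ V₂), (h.biprod (.biprod_inl_snd U₂ V₂)).of_iso a.symm (.refl _) b.symm,
    ⟨⟨biprod.inl, biprod.fst, by simp⟩⟩⟩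

lemma mem_addClosure_of_sum {S : Set C} {ι : Type*} [Fintype ι] {X : C} (g : ι → C)
    (hg : ∀ k, g k ∈ S) (a : ∀ k, X ⟶ g k) (b : ∀ k, g k ⟶ X) (h : ∑ k, a k ≫ b k = 𝟙 X) :
    X ∈ addClosure S := by
  let φ := (Fintype.equivFin ι).symm
  refine ⟨Fintype.card ι, fun k ↦ g (φ k), fun k ↦ hg _, biproduct.lift fun k ↦ a (φ k),
    biproduct.desc fun k ↦ b (φ k), ?_⟩
  rw [biproduct.lift_desc, ← h]
  exact φ.sum_comp fun k ↦ a k ≫ b k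

lemma exists_sum_of_mem_addClosure {S : Set C} {X : C} (h : X ∈ addClosure S) :
    ∃ (n : ℕ) (g : Fin n → C) (_ : ∀ k, g k ∈ S) (a : ∀ k, X ⟶ g k) (b : ∀ k, g k ⟶ X),
      ∑ k, a k ≫ b k = 𝟙 X := by
  obtain ⟨n, g, hg, s, p, hsp⟩ := h
  refine ⟨n, g, hg, fun k ↦ s ≫ biproduct.π g k, fun k ↦ biproduct.ι g k ≫ p, ?_⟩
  have : s ≫ (∑ k, biproduct.π g k ≫ biproduct.ι g k) ≫ p = 𝟙 X := by
    rw [biproduct.total, Category.id_comp, hsp]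
  rw [Preadditive.sum_comp, Preadditive.comp_sum] at this
  simpa using this

lemma subset_addClosure (S : Set C) : S ⊆ addClosure S := fun X hX ↦
  mem_addClosure_of_sum (fun _ : Unit ↦ X) (fun _ ↦ hX) (fun _ ↦ 𝟙 X) (fun _ ↦ 𝟙 X) (by simp)

/-- A class of objects closed under zero objects, binary biproducts and retracts
which contains `S` contains `addClosure S`. -/
lemma addClosure_induction {S : Set C} {p : C → Prop} (mem : ∀ X ∈ S, p X)
    (zero : ∀ X, IsZero X → p X) (sum : ∀ X Y, p X → p Y → p (X ⊞ Y))
    (retract : ∀ X Y, Retract X Y → p Y → p X) {X : C} (hX : X ∈ addClosure S) : p X := by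
  obtain ⟨n, g, hg, a, b, h⟩ := exists_sum_of_mem_addClosure hX
  have (s : Finset (Fin n)) : ∃ (Z : C) (α : X ⟶ Z) (β : Z ⟶ X), p Z ∧
      α ≫ β = ∑ k ∈ s, a k ≫ b k := by
    classical
    induction s using Finset.induction_on with
    | empty => exact ⟨0, 0, 0, zero _ (isZero_zero C), by simp⟩
    | insert k s hk ih =>
      obtain ⟨Z, α, β, hZ, hαβ⟩ := ih
      exact ⟨g k ⊞ Z, biprod.lift (a k) α, biprod.desc (b k) β,
        sum _ _ (mem _ (hg k)) hZ, by
          rw [biprod.lift_desc, hαβ, Finset.sum_insert hk]⟩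
  obtain ⟨Z, α, β, hZ, hαβ⟩ := this Finset.univ
  exact retract X Z ⟨α, β, hαβ.trans h⟩ hZ

lemma zero_mem_addClosure {S : Set C} {X : C} (hX : IsZero X) : X ∈ addClosure S :=
  mem_addClosure_of_sum (ι := Empty) (fun k ↦ k.elim) (fun k ↦ k.elim) (fun k ↦ k.elim)
    (fun k ↦ k.elim) (hX.eq_of_src _ _)

lemma biprod_mem_addClosure {S : Set C} {X Y : C} (hX : X ∈ addClosure S)
    (hY : Y ∈ addClosure S) : (X ⊞ Y) ∈ addClosure S := by
  obtain ⟨n, g, hg, a, b, h⟩ := exists_sum_of_mem_addClosure hX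
  obtain ⟨n', g', hg', a', b', h'⟩ := exists_sum_of_mem_addClosure hY
  refine mem_addClosure_of_sum (ι := Fin n ⊕ Fin n') (Sum.elim g g')
    (by rintro (k | k); exacts [hg k, hg' k])
    (fun k ↦ match k with
      | .inl k => biprod.fst ≫ a k
      | .inr k => biprod.snd ≫ a' k)
    (fun k ↦ match k with
      | .inl k => b k ≫ biprod.inl
      | .inr k => b' k ≫ biprod.inr) ?_
  have h₁ : ∑ k, (biprod.fst ≫ a k) ≫ b k ≫ (biprod.inl : X ⟶ X ⊞ Y) =
      (biprod.fst : X ⊞ Y ⟶ X) ≫ (∑ k, a k ≫ b k) ≫ biprod.inl := by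
    simp [Preadditive.sum_comp, Preadditive.comp_sum]
  have h₂ : ∑ k, (biprod.snd ≫ a' k) ≫ b' k ≫ (biprod.inr : Y ⟶ X ⊞ Y) =
      (biprod.snd : X ⊞ Y ⟶ Y) ≫ (∑ k, a' k ≫ b' k) ≫ biprod.inr := by
    simp [Preadditive.sum_comp, Preadditive.comp_sum]
  rw [Fintype.sum_sum_type]
  refine (congrArg₂ (· + ·) h₁ h₂).trans ?_
  rw [h, h', Category.id_comp, Category.id_comp, biprod.total]

lemma retract_mem_addClosure {S : Set C} {X Y : C} (ρ : Retract X Y)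
    (hY : Y ∈ addClosure S) : X ∈ addClosure S := by
  obtain ⟨n, g, hg, a, b, h⟩ := exists_sum_of_mem_addClosure hY
  refine mem_addClosure_of_sum g hg (fun k ↦ ρ.i ≫ a k) (fun k ↦ b k ≫ ρ.r) ?_
  have : ρ.i ≫ (∑ k, a k ≫ b k) ≫ ρ.r = 𝟙 X := by simp [h]
  simpa [Preadditive.sum_comp, Preadditive.comp_sum] using this

lemma left_mem_addClosure_biprod (X Y : C) : X ∈ addClosure {X ⊞ Y} :=
  retract_mem_addClosure ⟨biprod.inl, biprod.fst, by simp⟩ (subset_addClosure _ rfl)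

lemma right_mem_addClosure_biprod (X Y : C) : Y ∈ addClosure {X ⊞ Y} :=
  retract_mem_addClosure ⟨biprod.inr, biprod.snd, by simp⟩ (subset_addClosure _ rfl)

lemma addClosure_subset {S S' : Set C} (h : S ⊆ addClosure S') :
    addClosure S ⊆ addClosure S' := fun _ hX ↦
  addClosure_induction (p := (· ∈ addClosure S')) h (fun _ ↦ zero_mem_addClosure)
    (fun _ _ ↦ biprod_mem_addClosure) (fun _ _ ↦ retract_mem_addClosure) hX

lemma map_mem_addClosure {D : Type u'} [Category.{v'} D] [Abelian D] (F : C ⥤ D) [F.Additive]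
    {S : Set C} {S' : Set D} (h : ∀ X ∈ S, F.obj X ∈ S') {X : C} (hX : X ∈ addClosure S) :
    F.obj X ∈ addClosure S' := by
  obtain ⟨n, g, hg, a, b, hab⟩ := exists_sum_of_mem_addClosure hX
  refine mem_addClosure_of_sum (fun k ↦ F.obj (g k)) (fun k ↦ h _ (hg k))
    (fun k ↦ F.map (a k)) (fun k ↦ F.map (b k)) ?_
  simp only [← F.map_comp, ← F.map_sum, hab, F.map_id]

/-- The objects admitting a filtration of length `n` with subquotients in `add T`. -/
def IsFiltered (T : C) : ℕ → C → Prop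
  | 0, X => IsZero X
  | n + 1, X => ∃ U V, U ∈ addClosure {T} ∧ IsFiltered T n V ∧ IsExtension U X V

lemma IsFiltered.of_iso {T : C} {n : ℕ} {X Y : C} (h : IsFiltered T n X) (a : X ≅ Y) :
    IsFiltered T n Y := by
  cases n with
  | zero => exact IsZero.of_iso h a.symm
  | succ n =>
    obtain ⟨U, V, hU, hV, hX⟩ := h
    exact ⟨U, V, hU, hV, hX.of_iso (.refl _) a (.refl _)⟩

lemma IsFiltered.of_isZero {T : C} (n : ℕ) {X : C} (h : IsZero X) : IsFiltered T n X := by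
  induction n with
  | zero => exact h
  | succ n ih => exact ⟨X, X, zero_mem_addClosure h, ih, .of_isZero_right h⟩

lemma IsFiltered.of_mem_addClosure {T : C} (n : ℕ) {X : C} (h : X ∈ addClosure {T}) :
    IsFiltered T (n + 1) X :=
  ⟨X, 0, h, .of_isZero n (isZero_zero C), .of_isZero_right (isZero_zero C)⟩

lemma IsFiltered.biprod {T : C} {n : ℕ} {X Y : C} (hX : IsFiltered T n X)
    (hY : IsFiltered T n Y) : IsFiltered T n (X ⊞ Y) := by
  induction n generalizing X Y with
  | zero => exact (biprod_isZero_iff X Y).2 ⟨hX, hY⟩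
  | succ n ih =>
    obtain ⟨U, V, hU, hV, h⟩ := hX
    obtain ⟨U', V', hU', hV', h'⟩ := hY
    exact ⟨U ⊞ U', V ⊞ V', biprod_mem_addClosure hU hU', ih hV hV', h.biprod h'⟩

lemma IsFiltered.of_isExtension {T : C} {a b : ℕ} {U X V : C} (hU : IsFiltered T a U)
    (hV : IsFiltered T b V) (h : IsExtension U X V) : IsFiltered T (a + b) X := by
  induction a generalizing U X V with
  | zero =>
    obtain ⟨φ⟩ := h.nonempty_iso_of_isZero_left hU
    rw [Nat.zero_add]
    exact hV.of_iso φ.symm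
  | succ a ih =>
    obtain ⟨U', V', hU', hV', h'⟩ := hU
    obtain ⟨E, hE, hE'⟩ := h'.assoc h
    rw [Nat.succ_add]
    exact ⟨U', E, hU', ih hV' hV hE', hE⟩

lemma IsFiltered.map {D : Type u'} [Category.{v'} D] [Abelian D] (F : C ⥤ D) [F.Additive]
    [PreservesFiniteLimits F] [PreservesFiniteColimits F] {T : C} {n : ℕ} {X : C}
    (h : IsFiltered T n X) : IsFiltered (F.obj T) n (F.obj X) := by
  induction n generalizing X with
  | zero => exact F.map_isZero h
  | succ n ih =>
    obtain ⟨U, V, hU, hV, f, g, w, h⟩ := h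
    exact ⟨F.obj U, F.obj V, map_mem_addClosure F (by simp) hU, ih hV, F.map f, F.map g,
      by rw [← F.map_comp, w, F.map_zero], h.map_of_exact F⟩

lemma IsFiltered.mono {T T' : C} (hT : T ∈ addClosure {T'}) {n : ℕ} {X : C}
    (h : IsFiltered T n X) : IsFiltered T' n X := by
  induction n generalizing X with
  | zero => exact h
  | succ n ih =>
    obtain ⟨U, V, hU, hV, h⟩ := h
    exact ⟨U, V, addClosure_subset (by simpa using hT) hU, ih hV, h⟩

lemma IsFiltered.exists_syzygy {T Q Ω W : C} [Projective Q] (hQ : IsExtension Ω Q T)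
    (hΩW : Ω ∈ addClosure {W}) (hQW : Q ∈ addClosure {W}) {n : ℕ} {X : C}
    (h : IsFiltered T n X) : ∃ K P, Projective P ∧ P ∈ addClosure {W} ∧ IsFiltered W n K ∧
      IsExtension K P X := by
  induction n generalizing X with
  | zero => exact ⟨X, X, IsZero.projective h, zero_mem_addClosure h, h, .of_isZero_left h⟩
  | succ n ih =>
    obtain ⟨U, V, hU, hV, h⟩ := h
    obtain ⟨L, P, _, hP, hL, hLV⟩ := ih hV
    obtain ⟨K, R, _, hR, hK, hKU⟩ : ∃ K R, Projective R ∧ R ∈ addClosure {W} ∧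
        K ∈ addClosure {W} ∧ IsExtension K R U := by
      refine addClosure_induction (p := fun U ↦ ∃ K R, Projective R ∧ R ∈ addClosure {W} ∧
        K ∈ addClosure {W} ∧ IsExtension K R U) ?_ ?_ ?_ ?_ hU
      · rintro _ rfl
        exact ⟨Ω, Q, inferInstance, hQW, hΩW, hQ⟩
      · intro X hX
        exact ⟨X, X, hX.projective, zero_mem_addClosure hX, zero_mem_addClosure hX,
          .of_isZero_left hX⟩
      · rintro X Y ⟨K, R, _, hR, hK, h⟩ ⟨K', R', _, hR', hK', h'⟩
        exact ⟨K ⊞ K', R ⊞ R', inferInstance, biprod_mem_addClosure hR hR',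
          biprod_mem_addClosure hK hK', h.biprod h'⟩
      · rintro X Y ρ ⟨K, R, _, hR, hK, h⟩
        obtain ⟨L, hL, ⟨σ⟩⟩ := h.syzygy_of_retract ρ
        exact ⟨L, R, inferInstance, hR,
          retract_mem_addClosure σ (biprod_mem_addClosure hK hR), hL⟩
    obtain ⟨M, hM, hMX⟩ := h.horseshoe hKU hLV
    exact ⟨M, R ⊞ P, inferInstance, biprod_mem_addClosure hR hP, ⟨K, L, hK, hL, hM⟩, hMX⟩

lemma IsZero.of_retract {X Y : C} (hY : IsZero Y) (ρ : Retract X Y) : IsZero X := by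
  rw [IsZero.iff_id_eq_zero, ← ρ.retract, hY.eq_of_tgt ρ.i 0, zero_comp]

lemma mem_bracket_iff {T : C} {n : ℕ} {X : C} :
    X ∈ bracket T n ↔ ∃ Y, IsFiltered T n Y ∧ Nonempty (Retract X Y) := by
  induction n generalizing X with
  | zero => exact ⟨fun h ↦ ⟨X, h, ⟨.refl X⟩⟩, fun ⟨Y, hY, ⟨ρ⟩⟩ ↦ IsZero.of_retract hY ρ⟩
  | succ n ih =>
    constructor
    · refine addClosure_induction
        (p := fun X ↦ ∃ Y, IsFiltered T (n + 1) Y ∧ Nonempty (Retract X Y)) ?_ ?_ ?_ ?_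
      · rintro X ⟨U, V, hU, hV, h⟩
        obtain ⟨V', hV', ⟨ρ⟩⟩ := ih.1 hV
        obtain ⟨X', hX', hr⟩ := IsExtension.exists_of_retract h (.refl U) ρ
        exact ⟨X', ⟨U, V', hU, hV', hX'⟩, hr⟩
      · exact fun X hX ↦ ⟨X, .of_isZero _ hX, ⟨.refl X⟩⟩
      · rintro X Y ⟨X', hX', ⟨ρ⟩⟩ ⟨Y', hY', ⟨σ⟩⟩
        exact ⟨X' ⊞ Y', hX'.biprod hY', ⟨⟨biprod.map ρ.i σ.i, biprod.map ρ.r σ.r, by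
          ext <;> simp⟩⟩⟩
      · rintro X Y ρ ⟨Z, hZ, ⟨σ⟩⟩
        exact ⟨Z, hZ, ⟨ρ.trans σ⟩⟩
    · rintro ⟨Y, ⟨U, V, hU, hV, h⟩, ⟨ρ⟩⟩
      exact retract_mem_addClosure ρ
        (subset_addClosure _ ⟨U, V, hU, ih.2 ⟨V, hV, ⟨.refl V⟩⟩, h⟩)

lemma retract_mem_bracket {T : C} {n : ℕ} {X Y : C} (ρ : Retract X Y)
    (hY : Y ∈ bracket T n) : X ∈ bracket T n := by
  obtain ⟨Z, hZ, ⟨σ⟩⟩ := mem_bracket_iff.1 hY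
  exact mem_bracket_iff.2 ⟨Z, hZ, ⟨ρ.trans σ⟩⟩

lemma mem_bracket_of_isExtension {T : C} {a b : ℕ} {U X V : C} (hU : U ∈ bracket T a)
    (hV : V ∈ bracket T b) (h : IsExtension U X V) : X ∈ bracket T (a + b) := by
  obtain ⟨U', hU', ⟨ρ⟩⟩ := mem_bracket_iff.1 hU
  obtain ⟨V', hV', ⟨σ⟩⟩ := mem_bracket_iff.1 hV
  obtain ⟨X', hX', hr⟩ := h.exists_of_retract ρ σ
  exact mem_bracket_iff.2 ⟨X', hU'.of_isExtension hV' hX', hr⟩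

lemma map_mem_bracket {D : Type u'} [Category.{v'} D] [Abelian D] (F : C ⥤ D) [F.Additive]
    [PreservesFiniteLimits F] [PreservesFiniteColimits F] {T : C} {n : ℕ} {X : C}
    (h : X ∈ bracket T n) : F.obj X ∈ bracket (F.obj T) n := by
  obtain ⟨Y, hY, ⟨ρ⟩⟩ := mem_bracket_iff.1 h
  exact mem_bracket_iff.2 ⟨F.obj Y, hY.map F, ⟨ρ.map F⟩⟩

lemma bracket_mono {T T' : C} (hT : T ∈ addClosure {T'}) (n : ℕ) :
    bracket T n ⊆ bracket T' n := fun _ h ↦ by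
  obtain ⟨Y, hY, hr⟩ := mem_bracket_iff.1 h
  exact mem_bracket_iff.2 ⟨Y, hY.mono hT, hr⟩

/-- The syzygies of the objects of `[T]_n` can be chosen in `[W]_n` for a common object `W`. -/
lemma exists_bracket_syzygy [EnoughProjectives C] (T : C) :
    ∃ W : C, ∀ (n : ℕ) (X : C), X ∈ bracket T n →
      ∃ K P, Projective P ∧ K ∈ bracket W n ∧ IsExtension K P X := by
  let Ω := kernel (Projective.π T)
  refine ⟨Ω ⊞ Projective.over T, fun n X hX ↦ ?_⟩
  obtain ⟨Y, hY, ⟨ρ⟩⟩ := mem_bracket_iff.1 hX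
  cases n with
  | zero => exact ⟨X, X, IsZero.projective hX, hX, .of_isZero_left hX⟩
  | succ n =>
    obtain ⟨K, P, _, hP, hK, h⟩ := hY.exists_syzygy (.of_epi (Projective.π T))
      (left_mem_addClosure_biprod Ω (Projective.over T))
      (right_mem_addClosure_biprod Ω (Projective.over T))
    obtain ⟨L, hL, hr⟩ := h.syzygy_of_retract ρ
    exact ⟨L, P, inferInstance,
      mem_bracket_iff.2 ⟨K ⊞ P, hK.biprod (.of_mem_addClosure n hP), hr⟩, hL⟩

/-- Rotation of a short exact sequence along a projective presentation of the quotient. -/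
lemma IsExtension.rotate {A R Q K P : C} [Projective P] (h : IsExtension A R Q)
    (hK : IsExtension K P Q) : IsExtension K (A ⊞ P) R := by
  obtain ⟨M, hM, hR⟩ := h.horseshoe (.of_isZero_left (isZero_zero C)) hK
  obtain ⟨φ⟩ := hM.nonempty_iso_of_isZero_left (isZero_zero C)
  exact hR.of_iso φ (.refl _) (.refl _)

lemma extDim_le_iff {m : ℕ} :
    extDim C ≤ m ↔ ∃ k ≤ m, ∃ T : C, ∀ X : C, X ∈ bracket T (k + 1) := by
  constructor
  · intro h
    have hne : {x : ℕ∞ | ∃ m : ℕ, x = (m : ℕ∞) ∧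
        ∃ T : C, ∀ X : C, X ∈ bracket T (m + 1)}.Nonempty := by
      by_contra! h'
      rw [extDim, h', sInf_empty, top_le_iff] at h
      exact ENat.natCast_ne_top m h
    obtain ⟨k, hk, hT⟩ := csInf_mem hne
    exact ⟨k, by rw [extDim, hk] at h; exact_mod_cast h, hT⟩
  · rintro ⟨k, hk, hT⟩
    have : extDim C ≤ (k : ℕ∞) := sInf_le ⟨k, rfl, hT⟩
    exact this.trans (by exact_mod_cast hk)

end Abelian

lemma nonempty_fpow_obj_iso {C : Type u} [Category.{v} C] (F : C ⥤ C) (n : ℕ) (B : C) :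
    Nonempty ((fpow F n).obj (F.obj B) ≅ (fpow F (n + 1)).obj B) := by
  induction n with
  | zero => exact ⟨.refl _⟩
  | succ n ih => exact ⟨F.mapIso ih.some⟩

section CleftCoextension

variable {𝒜 : Type u} [Category.{v} 𝒜] [Abelian 𝒜] {ℬ : Type u'} [Category.{v'} ℬ] [Abelian ℬ]

lemma isExtension_of_isColimit_cokernelCofork {X Y Z : 𝒜} (f : X ⟶ Y) (g : Y ⟶ Z) [Mono f]
    (w : f ≫ g = 0) (h : IsColimit (CokernelCofork.ofπ g w)) : IsExtension X Y Z :=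
  ⟨f, g, w, .mk' ((ShortComplex.mk f g w).exact_of_g_is_cokernel h) inferInstance
    (Cofork.IsColimit.epi h)⟩

lemma nonempty_iso_kernel_of_retraction {X Y Z : 𝒜} {f : X ⟶ Y} {g : Y ⟶ Z} {w : f ≫ g = 0}
    (h : (ShortComplex.mk f g w).ShortExact) (r : Y ⟶ X) (hr : f ≫ r = 𝟙 X) :
    Nonempty (Z ≅ kernel r) := by
  have : Epi g := h.epi_g
  have : Epi (ShortComplex.mk f g w).g := h.epi_g
  let s : Z ⟶ Y := h.exact.desc (𝟙 Y - r ≫ f) (by simp [reassoc_of% hr])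
  have hs : g ≫ s = 𝟙 Y - r ≫ f := h.exact.g_desc _ _
  refine ⟨⟨kernel.lift r s ?_, kernel.ι r ≫ g, ?_, ?_⟩⟩
  · rw [← cancel_epi g, reassoc_of% hs]
    simp [hr]
  · rw [← cancel_epi g, kernel.lift_ι_assoc, reassoc_of% hs]
    simp [w]
  · rw [← cancel_mono (kernel.ι r)]
    simp [hs]

/-- For an adjunction `e ⊣ r`, the image under `e` of the cokernel of the unit at `X` only
depends on `e.obj X`. -/
lemma nonempty_map_cokernel_unit_iso {e : 𝒜 ⥤ ℬ} {r : ℬ ⥤ 𝒜} [e.Additive]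
    [PreservesFiniteLimits e] [PreservesFiniteColimits e] (adj : e ⊣ r) [e.Faithful]
    {G' : 𝒜 ⥤ 𝒜} {p : (e ⋙ r : 𝒜 ⥤ 𝒜) ⟶ G'} (hp : ∀ X : 𝒜, adj.unit.app X ≫ p.app X = 0)
    (hcoker : ∀ X : 𝒜, IsColimit (CokernelCofork.ofπ (p.app X) (hp X))) (X : 𝒜) :
    Nonempty (e.obj (G'.obj X) ≅ kernel (adj.counit.app (e.obj X))) := by
  have h : (ShortComplex.mk _ _ (hp X)).ShortExact :=
    .mk' ((ShortComplex.mk _ _ (hp X)).exact_of_g_is_cokernel (hcoker X))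
      (inferInstanceAs (Mono (adj.unit.app X))) (Cofork.IsColimit.epi (hcoker X))
  exact nonempty_iso_kernel_of_retraction (h.map_of_exact e) _ (adj.left_triangle_components X)

lemma nonempty_obj_cokernel_unit_iso {i : ℬ ⥤ 𝒜} {e : 𝒜 ⥤ ℬ} {r : ℬ ⥤ 𝒜} [e.Additive]
    [PreservesFiniteLimits e] [PreservesFiniteColimits e] (adj : e ⊣ r) [e.Faithful]
    (η : i ⋙ e ≅ 𝟭 ℬ)
    {G' : 𝒜 ⥤ 𝒜} {p : (e ⋙ r : 𝒜 ⥤ 𝒜) ⟶ G'} (hp : ∀ X : 𝒜, adj.unit.app X ≫ p.app X = 0)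
    (hcoker : ∀ X : 𝒜, IsColimit (CokernelCofork.ofπ (p.app X) (hp X)))
    {F' : ℬ ⥤ ℬ} (hF' : F' ≅ i ⋙ G' ⋙ e) (X : 𝒜) :
    Nonempty (F'.obj (e.obj X) ≅ e.obj (G'.obj X)) := by
  obtain ⟨a⟩ := nonempty_map_cokernel_unit_iso adj hp hcoker (i.obj (e.obj X))
  obtain ⟨b⟩ := nonempty_map_cokernel_unit_iso adj hp hcoker X
  let φ : e.obj (i.obj (e.obj X)) ≅ e.obj X := η.app (e.obj X)
  exact ⟨hF'.app (e.obj X) ≪≫ a ≪≫ kernel.mapIso _ _ (e.mapIso (r.mapIso φ)) φ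
    (by simp) ≪≫ b.symm⟩

end CleftCoextension

/-- Let `(ℬ, 𝒜, i, e, r)` be a cleft coextension of abelian categories with
enough projectives such that `r` is exact and the induced endofunctor `F'` satisfies
`F'ⁿ = 0` for a positive integer `n`.  Then `dim ℬ ≤ dim 𝒜 ≤ n(dim ℬ + 1) − 1`. -/
theorem extDim_cleftCoextension
    {𝒜 : Type u} [Category.{v} 𝒜] [Abelian 𝒜] [EnoughProjectives 𝒜]
    {ℬ : Type u'} [Category.{v'} ℬ] [Abelian ℬ] [EnoughProjectives ℬ]
    (i : ℬ ⥤ 𝒜) (e : 𝒜 ⥤ ℬ) (r : ℬ ⥤ 𝒜)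
    [i.Additive] [e.Additive] [r.Additive]
    [e.Faithful] [PreservesFiniteLimits e] [PreservesFiniteColimits e]
    [PreservesFiniteLimits r] [PreservesFiniteColimits r]
    (adj : e ⊣ r) (η : i ⋙ e ≅ 𝟭 ℬ)
    (G' : 𝒜 ⥤ 𝒜) (p : (e ⋙ r : 𝒜 ⥤ 𝒜) ⟶ G')
    (hp : ∀ X : 𝒜, adj.unit.app X ≫ p.app X = 0)
    (hcoker : ∀ X : 𝒜, IsColimit (CokernelCofork.ofπ (p.app X) (hp X)))
    (F' : ℬ ⥤ ℬ) (hF' : F' ≅ i ⋙ G' ⋙ e)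
    (n : ℕ) (hn : 0 < n) (hFn : ∀ B : ℬ, IsZero ((fpow F' n).obj B)) :
    extDim ℬ ≤ extDim 𝒜 ∧ extDim 𝒜 ≤ (n : ℕ∞) * (extDim ℬ + 1) - 1 := by
  constructor
  · refine le_sInf ?_
    rintro _ ⟨m, rfl, T, hT⟩
    exact extDim_le_iff.2 ⟨m, le_rfl, e.obj T, fun B ↦
      retract_mem_bracket (.ofIso (η.app B).symm) (map_mem_bracket e (hT (i.obj B)))⟩
  · by_cases htop : extDim ℬ = ⊤
    · simp [htop, ENat.mul_top, hn.ne']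
    obtain ⟨m, hm⟩ := ENat.ne_top_iff_exists.1 htop
    obtain ⟨k, hk, T, hT⟩ := extDim_le_iff.1 hm.ge
    have key (j : ℕ) : ∃ W : 𝒜, ∀ A : 𝒜, IsZero ((fpow F' j).obj (e.obj A)) →
        A ∈ bracket W (j * (k + 1)) := by
      induction j with
      | zero =>
        refine ⟨r.obj T, fun A hA ↦ ?_⟩
        rw [Nat.zero_mul]
        refine (IsZero.iff_id_eq_zero A).2 (e.map_injective ?_)
        exact IsZero.eq_of_src hA _ _
      | succ j ih =>
        obtain ⟨W, hW⟩ := ih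
        obtain ⟨W', hW'⟩ := exists_bracket_syzygy W
        refine ⟨W' ⊞ r.obj T, fun A hA ↦ ?_⟩
        obtain ⟨a⟩ := nonempty_obj_cokernel_unit_iso adj η hp hcoker hF' A
        obtain ⟨b⟩ := nonempty_fpow_obj_iso F' j (e.obj A)
        obtain ⟨K, P, _, hK, h⟩ := hW' _ _ (hW (G'.obj A)
          (hA.of_iso ((fpow F' j).mapIso a.symm ≪≫ b)))
        have hA := (isExtension_of_isColimit_cokernelCofork _ _ (hp A) (hcoker A)).rotate h
        rw [Nat.succ_mul]
        exact retract_mem_bracket (Y := A ⊞ P) ⟨biprod.inl, biprod.fst, by simp⟩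
          (mem_bracket_of_isExtension
            (bracket_mono (left_mem_addClosure_biprod _ _) _ hK)
            (bracket_mono (right_mem_addClosure_biprod _ _) _
              (map_mem_bracket r (hT (e.obj A)))) hA)
    obtain ⟨W, hW⟩ := key n
    have h₁ : n * (k + 1) - 1 + 1 = n * (k + 1) := Nat.sub_add_cancel (Nat.mul_pos hn k.succ_pos)
    have h₂ : extDim 𝒜 ≤ ((n * (m + 1) - 1 : ℕ) : ℕ∞) :=
      extDim_le_iff.2 ⟨n * (k + 1) - 1, by gcongr, W, fun A ↦ by
        rw [h₁]; exact hW A (hFn _)⟩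
    rw [← hm]
    exact_mod_cast h₂
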